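/- Let Λ be an artin algebra, P the class of finitely generated right Λ-modules of finite projective dimension, assumed contravariantly finite, and let E be the direct sum of the indecomposable Ext-injective modules in P. Then the finitistic dimension of Λ equals the projective dimension of E. -/

import Mathlib

open CategoryTheory

universe u

/-- The `n`-th Ext group of `A`-modules `M`, `N`. -/
noncomputable abbrev ext {A : Type u} [Ring A] (M N : ModuleCat.{u} A) (n : ℕ) : Type u :=
  ((Ext ℤ (ModuleCat.{u} A) n).obj (Opposite.op M)).obj N

/-- `Ext^i(N, M) = 0` for all `i > 0`. -/
def ExtVanish {A : Type u} [Ring A] (N M : ModuleCat.{u} A) : Prop :=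
  ∀ i, 0 < i → Subsingleton (ext N M i)

/-- `M` has projective dimension at most `n`, i.e. `Ext^i(M, -) = 0` for `i > n`. -/
def pdLE {A : Type u} [Ring A] (M : ModuleCat.{u} A) (n : ℕ) : Prop :=
  ∀ i, n < i → ∀ N : ModuleCat.{u} A, Subsingleton (ext M N i)

/-- The projective dimension of `M`, as an element of `ℕ∞` (`⊤` if infinite). -/
noncomputable def projDim {A : Type u} [Ring A] (M : ModuleCat.{u} A) : ℕ∞ :=
  sInf {d : ℕ∞ | ∃ n : ℕ, d = n ∧ pdLE M n}

/-- Membership in `𝒫`: finitely generated of finite projective dimension. -/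
def InP {A : Type u} [Ring A] (M : ModuleCat.{u} A) : Prop :=
  Module.Finite A M ∧ ∃ n, pdLE M n

/-- The finitistic dimension of `A`. -/
noncomputable def findim (A : Type u) [Ring A] : ℕ∞ :=
  sSup {d : ℕ∞ | ∃ M : ModuleCat.{u} A, InP M ∧ d = projDim M}

/-- `M` is a direct summand of `S`. -/
def IsSummand {A : Type u} [Ring A] (M S : ModuleCat.{u} A) : Prop :=
  ∃ (s : M →ₗ[A] S) (r : S →ₗ[A] M), r ∘ₗ s = LinearMap.id

/-- `M` belongs to `add 𝒳`: `M` is a direct summand of a finite direct sum of objects of `𝒳`. -/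
def InAddOf {A : Type u} [Ring A] (X : ModuleCat.{u} A → Prop) (M : ModuleCat.{u} A) : Prop :=
  ∃ (k : ℕ) (F : Fin k → ModuleCat.{u} A), (∀ i, X (F i)) ∧
    IsSummand M (ModuleCat.of A (DirectSum (Fin k) (fun i => ↥(F i))))

/-- `M` belongs to `Add T`: `M` is a direct summand of an arbitrary direct sum of copies of `T`. -/
def InAdd {A : Type u} [Ring A] (T M : ModuleCat.{u} A) : Prop :=
  ∃ ι : Type u, IsSummand M (ModuleCat.of A (DirectSum ι (fun _ => ↥T)))

/-- `M ∈ 𝒳^⊥`: `Ext^i(N, M) = 0` for all `N ∈ 𝒳` and `i > 0`. -/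
def InPerpOf {A : Type u} [Ring A] (X : ModuleCat.{u} A → Prop) (M : ModuleCat.{u} A) : Prop :=
  ∀ N, X N → ExtVanish N M

/-- `M` is Ext-injective in `𝒫`: `M ∈ 𝒫` and `Ext^1(N, M) = 0` for all `N ∈ 𝒫`. -/
def ExtInjInP {A : Type u} [Ring A] (M : ModuleCat.{u} A) : Prop :=
  InP M ∧ ∀ N : ModuleCat.{u} A, InP N → Subsingleton (ext N M 1)

/-- `M` is splitting injective in `𝒳`: every injective map `M → Y` with `Y ∈ add 𝒳` splits. -/
def SplittingInjIn {A : Type u} [Ring A] (X : ModuleCat.{u} A → Prop)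
    (M : ModuleCat.{u} A) : Prop :=
  ∀ Y : ModuleCat.{u} A, InAddOf X Y → ∀ f : M →ₗ[A] Y, Function.Injective f →
    ∃ r : Y →ₗ[A] M, r ∘ₗ f = LinearMap.id

/-- `0 → M₁ → M₂ → M₃ → 0` is a short exact sequence. -/
def ShortExact {A : Type u} [Ring A] {M₁ M₂ M₃ : ModuleCat.{u} A}
    (f : M₁ →ₗ[A] M₂) (g : M₂ →ₗ[A] M₃) : Prop :=
  Function.Injective f ∧ Function.Exact f g ∧ Function.Surjective g

/-- `f : XM → M` is a right `𝒳`-approximation of `M`. -/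
def IsRightApprox {A : Type u} [Ring A] (X : ModuleCat.{u} A → Prop)
    {XM M : ModuleCat.{u} A} (f : XM →ₗ[A] M) : Prop :=
  X XM ∧ ∀ Y : ModuleCat.{u} A, X Y → ∀ g : Y →ₗ[A] M, ∃ h : Y →ₗ[A] XM, f ∘ₗ h = g

/-- `f : XM → M` is a minimal right `𝒳`-approximation. -/
def IsMinimalRightApprox {A : Type u} [Ring A] (X : ModuleCat.{u} A → Prop)
    {XM M : ModuleCat.{u} A} (f : XM →ₗ[A] M) : Prop :=
  IsRightApprox X f ∧ ∀ g : XM →ₗ[A] XM, f ∘ₗ g = f → Function.Bijective g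

/-- `𝒳` is contravariantly finite in `mod A`. -/
def ContravariantlyFinite {A : Type u} [Ring A] (X : ModuleCat.{u} A → Prop) : Prop :=
  ∀ M : ModuleCat.{u} A, Module.Finite A M →
    ∃ (XM : ModuleCat.{u} A) (f : XM →ₗ[A] M), IsRightApprox X f

/-- `M` is an indecomposable module: nonzero, and its only idempotent endomorphisms
are `0` and the identity. -/
def Indec {A : Type u} [Ring A] (M : ModuleCat.{u} A) : Prop :=
  (¬ Subsingleton M) ∧ ∀ e : M →ₗ[A] M, e ∘ₗ e = e → e = 0 ∨ e = LinearMap.id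

/-- `L` admits a finite coresolution `0 → L → C^0 → ⋯ → C^n → 0` with all `C^i ∈ add T`. -/
def HasAddCoresolution {A : Type u} [Ring A] (T L : ModuleCat.{u} A) : Prop :=
  ∃ (C : ℕ → ModuleCat.{u} A) (d : ∀ i, C i →ₗ[A] C (i+1)) (f : L →ₗ[A] C 0),
    Function.Injective f ∧ Function.Exact f (d 0) ∧
    (∀ i, Function.Exact (d i) (d (i+1))) ∧
    (∀ i, InAddOf (fun X => X = T) (C i)) ∧
    (∃ m, ∀ i, m ≤ i → Subsingleton (C i))

/-- `T` is a tilting `A`-module. -/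
def IsTilting {A : Type u} [Ring A] (T : ModuleCat.{u} A) : Prop :=
  Module.Finite A T ∧ (∃ n, pdLE T n) ∧ ExtVanish T T ∧
    HasAddCoresolution T (ModuleCat.of A A)

/-- `𝒳` is a resolving subcategory of `mod A`. -/
def Resolving {A : Type u} [Ring A] (X : ModuleCat.{u} A → Prop) : Prop :=
  (∀ M : ModuleCat.{u} A, Module.Finite A M → Module.Projective A M → X M) ∧
  (∀ (M₁ M₂ M₃ : ModuleCat.{u} A) (f : M₁ →ₗ[A] M₂) (g : M₂ →ₗ[A] M₃),
      ShortExact f g → X M₁ → X M₃ → X M₂) ∧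
  (∀ (M₁ M₂ M₃ : ModuleCat.{u} A) (f : M₁ →ₗ[A] M₂) (g : M₂ →ₗ[A] M₃),
      ShortExact f g → X M₂ → X M₃ → X M₁)

/-- `F` is a complete irredundant family of representatives of the isomorphism classes of
indecomposable Ext-injective modules in `𝒫`. -/
def IsCompleteExtInjFamily {A : Type u} [Ring A] {ι : Type u}
    (F : ι → ModuleCat.{u} A) : Prop :=
  (∀ i, Indec (F i) ∧ ExtInjInP (F i)) ∧
  (∀ M : ModuleCat.{u} A, Indec M → ExtInjInP M → ∃ i, Nonempty (M ≃ₗ[A] F i)) ∧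
  (∀ i j, Nonempty (F i ≃ₗ[A] F j) → i = j)

/-- `I` is a complete set of pairwise non-isomorphic indecomposable injective modules. -/
def IsCompleteIndecInjFamily {A : Type u} [Ring A] {n : ℕ}
    (I : Fin n → ModuleCat.{u} A) : Prop :=
  (∀ j, Module.Finite A (I j) ∧ Module.Injective A (I j) ∧ Indec (I j)) ∧
  (∀ M : ModuleCat.{u} A, Module.Finite A M → Module.Injective A M → Indec M →
      ∃ j, Nonempty (M ≃ₗ[A] I j)) ∧
  (∀ j k, Nonempty (I j ≃ₗ[A] I k) → j = k)

/-!
Every map from a module in `𝒫` to `Λ / rad Λ` factors through its right `𝒫`-approximation, of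
projective dimension `d` say. Simple modules are summands of `Λ / rad Λ`, and the property that all
maps from `𝒫` factor through modules in `𝒫` of projective dimension at most `d` is closed under
extensions, so it holds for every finitely generated module. For `M` in `𝒫`, factoring the identity
of `M` exhibits `M` as a summand of such a module. Hence `d` bounds the projective dimensions in
`𝒫`.

The minimal right `𝒫`-approximation of an injective module is Ext-injective, because an extension
of a module in `𝒫` by it maps back to the injective module through the approximation, and
minimality turns this into a splitting. Embedding `M` in `𝒫` into a finitely generated injective
module and lifting to the approximation gives an exact sequence `0 → M → Y → Z → 0` with `Y`
Ext-injective and `Z` in `𝒫`. If all Ext-injective modules have projective dimension at most `n`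
and `𝒫` is bounded by `n + k + 1`, this sequence lowers the bound to `n + k`. Descending to `k = 0`,
the finitistic dimension is attained by the Ext-injective modules, hence by their indecomposable
summands.
-/

section AbelianCategory

open Limits Abelian

universe w v'

variable {C : Type v'} [Category.{w} C] [Abelian C]

theorem shortExact_pushout {X₁ X₂ X₃ Y : C} {f : X₁ ⟶ X₂} {g : X₂ ⟶ X₃} {w : f ≫ g = 0}
    (h : (ShortComplex.mk f g w).ShortExact) (φ : X₁ ⟶ Y) :
    (ShortComplex.mk (pushout.inr f φ) (pushout.desc g 0 (w.trans comp_zero.symm))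
      (pushout.inr_desc _ _ _)).ShortExact := by
  have : Mono f := h.mono_f
  have : Epi g := h.epi_g
  have hepi : Epi (pushout.desc g (0 : Y ⟶ X₃) (w.trans comp_zero.symm)) :=
    epi_of_epi_fac (f := pushout.inl f φ) (pushout.inl_desc _ _ _)
  refine
    { exact := ShortComplex.exact_of_g_is_cokernel _ <| CokernelCofork.IsColimit.ofπ' _ _
        fun {Z} k hk ↦ ?_
      mono_f := Abelian.mono_pushout_of_mono_f f φ
      epi_g := hepi }
  dsimp only at k hk
  have hfk : f ≫ pushout.inl f φ ≫ k = 0 := by rw [pushout.condition_assoc, hk, comp_zero]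
  refine ⟨h.exact.desc _ hfk, pushout.hom_ext ?_ ?_⟩
  · rw [pushout.inl_desc_assoc]
    exact h.exact.g_desc _ hfk
  · rw [pushout.inr_desc_assoc, zero_comp, hk]

theorem subsingleton_ext_one_of_forall_isSplitMono [HasExt.{w} C] [EnoughProjectives C] {X Z : C}
    (h : ∀ (W : C) (f : X ⟶ W) (g : W ⟶ Z) (w : f ≫ g = 0),
      (ShortComplex.mk f g w).ShortExact → IsSplitMono f) :
    Subsingleton (Abelian.Ext.{w} Z X 1) := by
  refine subsingleton_of_forall_eq 0 fun e ↦ ?_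
  let ⟨p⟩ := EnoughProjectives.presentation Z
  have hS : (ShortComplex.mk _ _ (kernel.condition p.f)).ShortExact :=
    { exact := ShortComplex.exact_kernel p.f }
  obtain ⟨x, rfl⟩ := Ext.contravariant_sequence_exact₃ hS X e (Ext.eq_zero_of_projective _)
    (add_zero 1)
  obtain ⟨φ, rfl⟩ := Ext.homEquiv₀.symm.surjective x
  have := h _ _ _ _ (shortExact_pushout hS φ)
  have hφ : φ = kernel.ι p.f ≫ pushout.inl (kernel.ι p.f) φ ≫
      retraction (pushout.inr (kernel.ι p.f) φ) := by
    rw [pushout.condition_assoc, IsSplitMono.id, Category.comp_id]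
  rw [hφ, Ext.homEquiv₀_symm_apply, ← Ext.mk₀_comp_mk₀]
  exact hS.extClass_comp_assoc _

theorem ext_eq_zero_of_forall_sigma_ι_comp_eq_zero [HasExt.{w} C] [EnoughInjectives C]
    {ι : Type*} (F : ι → C) [HasCoproduct F] {n : ℕ} {N : C} (e : Abelian.Ext.{w} (∐ F) N n)
    (he : ∀ i, (Ext.mk₀ (Sigma.ι F i)).comp e (zero_add n) = 0) : e = 0 := by
  induction n generalizing N with
  | zero =>
    obtain ⟨f, rfl⟩ := Ext.homEquiv₀.symm.surjective e
    simp only [Ext.homEquiv₀_symm_apply, Ext.mk₀_comp_mk₀, Ext.mk₀_eq_zero_iff] at he ⊢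
    exact Sigma.hom_ext _ _ fun i ↦ (he i).trans comp_zero.symm
  | succ n ih =>
    let ⟨p⟩ := EnoughInjectives.presentation N
    have hS : (ShortComplex.mk _ _ (cokernel.condition p.f)).ShortExact :=
      { exact := ShortComplex.exact_cokernel p.f }
    obtain ⟨x, rfl⟩ := Ext.covariant_sequence_exact₁ (∐ F) hS e (Ext.eq_zero_of_injective _) rfl
    dsimp only at x
    have hx (i : ι) : ∃ y : Abelian.Ext (F i) p.J n,
        y.comp (Ext.mk₀ (cokernel.π p.f)) (add_zero n) =
          (Ext.mk₀ (Sigma.ι F i)).comp x (zero_add n) :=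
      Ext.covariant_sequence_exact₃ (F i) hS _ rfl
        ((Ext.comp_assoc _ _ _ _ _ (by lia)).trans (he i))
    choose y hy using hx
    obtain ⟨z, rfl⟩ : ∃ z : Abelian.Ext (∐ F) p.J n,
        z.comp (Ext.mk₀ (cokernel.π p.f)) (add_zero n) = x := by
      cases n with
      | zero =>
        choose ψ hψ using fun i ↦ Ext.homEquiv₀.symm.surjective (y i)
        obtain ⟨φ, rfl⟩ := Ext.homEquiv₀.symm.surjective x
        refine ⟨Ext.mk₀ (Sigma.desc ψ), ?_⟩
        rw [Ext.mk₀_comp_mk₀, Ext.homEquiv₀_symm_apply]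
        congr 1
        refine Sigma.hom_ext _ _ fun i ↦ Ext.homEquiv₀.symm.injective ?_
        simpa [← hψ] using hy i
      | succ n =>
        have hx : x = 0 := ih x fun i ↦ by rw [← hy, (y i).eq_zero_of_injective, Ext.zero_comp]
        exact ⟨0, by rw [hx, Ext.zero_comp]⟩
    rw [Ext.comp_assoc _ _ _ _ (zero_add 1) (by lia)]
    have hπ : (Ext.mk₀ (cokernel.π p.f)).comp hS.extClass (zero_add 1) = 0 := hS.comp_extClass
    rw [hπ, Ext.comp_zero]

theorem hasProjectiveDimensionLT_sigma [HasExt.{w} C] [EnoughInjectives C] {ι : Type*}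
    (F : ι → C) [HasCoproduct F] (n : ℕ) [∀ i, HasProjectiveDimensionLT (F i) n] :
    HasProjectiveDimensionLT (∐ F) n :=
  .mk fun _ hi _ e ↦ ext_eq_zero_of_forall_sigma_ι_comp_eq_zero F e fun _ ↦
    Ext.eq_zero_of_hasProjectiveDimensionLT _ n hi

end AbelianCategory

section Modules

variable {A : Type u} [Ring A]

theorem subsingleton_ext_succ_iff (M N : ModuleCat.{u} A) (n : ℕ) :
    Subsingleton (ext M N (n + 1)) ↔ Subsingleton (Abelian.Ext.{u} M N (n + 1)) := by
  let P : ProjectiveResolution M := ProjectiveResolution.of M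
  trans ∀ f : P.complex.X (n + 1) ⟶ N, P.complex.d (n + 2) (n + 1) ≫ f = 0 →
      ∃ g : P.complex.X n ⟶ N, P.complex.d (n + 1) n ≫ g = f
  · have e := P.isoExt (R := ℤ) (n + 1) N
    rw [(e.toLinearEquiv.toEquiv).subsingleton_congr, ← ModuleCat.isZero_iff_subsingleton,
      ← HomologicalComplex.exactAt_iff_isZero_homology,
      HomologicalComplex.exactAt_iff' _ n (n + 1) (n + 2) (by simp) (by simp),
      ShortComplex.moduleCat_exact_iff]
    exact Iff.rfl
  · constructor
    · intro h
      refine subsingleton_of_forall_eq 0 fun α ↦ ?_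
      obtain ⟨f, hf, rfl⟩ := P.extMk_surjective α (n + 2) rfl
      exact (P.extMk_eq_zero_iff f _ rfl hf n rfl).2 (h f hf)
    · intro h f hf
      rw [← P.extMk_eq_zero_iff f (n + 2) rfl hf n rfl]
      exact Subsingleton.elim _ _

theorem pdLE_iff_hasProjectiveDimensionLE (M : ModuleCat.{u} A) (n : ℕ) :
    pdLE M n ↔ HasProjectiveDimensionLE M n := by
  rw [HasProjectiveDimensionLE, hasProjectiveDimensionLT_iff.{u}]
  refine ⟨fun h i hi N e ↦ ?_, fun h i hi N ↦ ?_⟩ <;>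
    obtain ⟨i, rfl⟩ := Nat.exists_eq_add_one_of_ne_zero (Nat.ne_zero_of_lt hi)
  · have := (subsingleton_ext_succ_iff M N i).1 (h _ hi N)
    exact Subsingleton.elim _ _
  · exact (subsingleton_ext_succ_iff M N i).2 (subsingleton_of_forall_eq 0 fun e ↦ h _ hi e)

theorem pdLE.mono {M : ModuleCat.{u} A} {m n : ℕ} (h : pdLE M m) (hmn : m ≤ n) : pdLE M n :=
  fun i hi ↦ h i (hmn.trans_lt hi)

theorem projDim_le_iff (M : ModuleCat.{u} A) (n : ℕ) : projDim M ≤ n ↔ pdLE M n := by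
  refine ⟨fun h ↦ ?_, fun h ↦ sInf_le ⟨n, rfl, h⟩⟩
  obtain ⟨-, ⟨k, rfl, hk⟩, hkn⟩ :=
    sInf_lt_iff.1 (h.trans_lt (ENat.natCast_lt_natCast.2 n.lt_succ_self))
  exact hk.mono (Nat.lt_succ_iff.1 (ENat.natCast_lt_natCast.1 hkn))

theorem findim_le_iff (n : ℕ) : findim A ≤ n ↔ ∀ M : ModuleCat.{u} A, InP M → pdLE M n := by
  simp only [findim, sSup_le_iff, Set.mem_ofPred_eq, forall_exists_index, and_imp,
    ← projDim_le_iff]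
  exact ⟨fun h M hM ↦ h _ M hM rfl, fun h _ M hM hd ↦ hd ▸ h M hM⟩

theorem shortExact_hom_iff {S : ShortComplex (ModuleCat.{u} A)} :
    ShortExact S.f.hom S.g.hom ↔ S.ShortExact :=
  ⟨fun h ↦ ModuleCat.shortComplex_shortExact S h.2.1 h.1 h.2.2, fun h ↦
    ⟨h.moduleCat_injective_f, (ShortComplex.ShortExact.moduleCat_exact_iff_function_exact _).1
      h.exact, h.moduleCat_surjective_g⟩⟩

theorem shortExact_mkQ_range {M N : ModuleCat.{u} A} {f : M →ₗ[A] N} (hf : Function.Injective f) :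
    ShortExact (M₃ := .of A (N ⧸ LinearMap.range f)) f (LinearMap.range f).mkQ :=
  ⟨hf, f.exact_map_mkQ_range, Submodule.mkQ_surjective _⟩

theorem shortExact_subtype_ker {M N : ModuleCat.{u} A} {f : M →ₗ[A] N}
    (hf : Function.Surjective f) :
    ShortExact (M₁ := .of A (LinearMap.ker f)) (LinearMap.ker f).subtype f :=
  ⟨Subtype.val_injective, f.exact_subtype_ker_map, hf⟩

namespace ShortExact

variable {M₁ M₂ M₃ : ModuleCat.{u} A} {f : M₁ →ₗ[A] M₂} {g : M₂ →ₗ[A] M₃}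

theorem shortComplex_shortExact (h : ShortExact f g) :
    (ModuleCat.shortComplexOfCompEqZero f g h.2.1.linearMap_comp_eq_zero).ShortExact :=
  shortExact_hom_iff.1 h

theorem pdLE_left {n : ℕ} (h : ShortExact f g) (h₂ : pdLE M₂ n) (h₃ : pdLE M₃ (n + 1)) :
    pdLE M₁ n := by
  rw [pdLE_iff_hasProjectiveDimensionLE] at *
  exact h.shortComplex_shortExact.hasProjectiveDimensionLT_X₁ _ h₂ h₃

theorem pdLE_middle {n : ℕ} (h : ShortExact f g) (h₁ : pdLE M₁ n) (h₃ : pdLE M₃ n) :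
    pdLE M₂ n := by
  rw [pdLE_iff_hasProjectiveDimensionLE] at *
  exact h.shortComplex_shortExact.hasProjectiveDimensionLT_X₂ _ h₁ h₃

theorem pdLE_right {n : ℕ} (h : ShortExact f g) (h₁ : pdLE M₁ n) (h₂ : pdLE M₂ (n + 1)) :
    pdLE M₃ (n + 1) := by
  rw [pdLE_iff_hasProjectiveDimensionLE] at *
  exact h.shortComplex_shortExact.hasProjectiveDimensionLT_X₃ _ h₁ h₂

theorem inP_left [IsNoetherianRing A] (h : ShortExact f g) (h₂ : InP M₂) (h₃ : InP M₃) :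
    InP M₁ := by
  obtain ⟨_, m, hm⟩ := h₂
  obtain ⟨-, n, hn⟩ := h₃
  exact ⟨.of_injective f h.1, max m n,
    h.pdLE_left (hm.mono (le_max_left m n)) (hn.mono (by omega))⟩

theorem inP_middle (h : ShortExact f g) (h₁ : InP M₁) (h₃ : InP M₃) : InP M₂ := by
  obtain ⟨_, m, hm⟩ := h₁
  obtain ⟨_, n, hn⟩ := h₃
  exact ⟨.of_exact h.2.1 h.2.2, max m n,
    h.pdLE_middle (hm.mono (le_max_left m n)) (hn.mono (le_max_right m n))⟩

theorem inP_right (h : ShortExact f g) (h₁ : InP M₁) (h₂ : InP M₂) : InP M₃ := by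
  obtain ⟨-, m, hm⟩ := h₁
  obtain ⟨_, n, hn⟩ := h₂
  exact ⟨.of_surjective g h.2.2, max m n + 1,
    h.pdLE_right (hm.mono (le_max_left m n)) (hn.mono (by omega))⟩

end ShortExact

theorem pdLE_of_projective (M : ModuleCat.{u} A) [Module.Projective A M] (n : ℕ) : pdLE M n := by
  have : Projective M := (IsProjective.iff_projective M).1 ‹_›
  exact (pdLE_iff_hasProjectiveDimensionLE M n).2 inferInstance

theorem resolving_inP [IsNoetherianRing A] : Resolving (InP : ModuleCat.{u} A → Prop) :=
  ⟨fun M _ _ ↦ ⟨‹_›, 0, pdLE_of_projective M 0⟩, fun _ _ _ _ _ h ↦ h.inP_middle,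
    fun _ _ _ _ _ h ↦ h.inP_left⟩

theorem pdLE_directSum {ι : Type u} (F : ι → ModuleCat.{u} A) {n : ℕ} (h : ∀ i, pdLE (F i) n) :
    pdLE (ModuleCat.of A (DirectSum ι fun i ↦ ↥(F i))) n := by
  classical
  simp only [pdLE_iff_hasProjectiveDimensionLE] at h ⊢
  have := hasProjectiveDimensionLT_sigma.{u} F (n + 1)
  exact hasProjectiveDimensionLT_of_iso (ModuleCat.coprodIsoDirectSum F) (n + 1)

namespace IsSummand

variable {M S : ModuleCat.{u} A}

theorem nonempty_retract (h : IsSummand M S) : Nonempty (Retract M S) :=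
  let ⟨s, r, hrs⟩ := h
  ⟨⟨ModuleCat.ofHom s, ModuleCat.ofHom r, ModuleCat.hom_ext hrs⟩⟩

theorem finite (h : IsSummand M S) [Module.Finite A S] : Module.Finite A M :=
  let ⟨_, r, hrs⟩ := h
  .of_surjective r (LinearMap.surjective_of_comp_eq_id _ _ hrs)

theorem pdLE {n : ℕ} (h : IsSummand M S) (hS : pdLE S n) : pdLE M n := by
  obtain ⟨r⟩ := h.nonempty_retract
  rw [pdLE_iff_hasProjectiveDimensionLE] at *
  exact r.hasProjectiveDimensionLT _

theorem inP (h : IsSummand M S) (hS : InP S) : InP M :=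
  let ⟨_, n, hn⟩ := hS
  ⟨h.finite, n, h.pdLE hn⟩

theorem extInjInP (h : IsSummand M S) (hS : ExtInjInP S) : ExtInjInP M := by
  obtain ⟨r⟩ := h.nonempty_retract
  refine ⟨h.inP hS.1, fun N hN ↦ ?_⟩
  have := hS.2 N hN
  let r' := r.map ((Ext ℤ (ModuleCat.{u} A) 1).obj (.op N))
  exact ((ModuleCat.mono_iff_injective r'.i).1 inferInstance).subsingleton

end IsSummand

end Modules

section Factor

variable {A : Type u} [Ring A]

namespace ShortExact

variable {M₁ M₂ M₃ : ModuleCat.{u} A} {f : M₁ →ₗ[A] M₂} {g : M₂ →ₗ[A] M₃}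

theorem exists_comp_eq_of_comp_eq_zero (h : ShortExact f g) {K : ModuleCat.{u} A} (k : K →ₗ[A] M₂)
    (hk : g ∘ₗ k = 0) : ∃ k' : K →ₗ[A] M₁, f ∘ₗ k' = k := by
  have hS := h.shortComplex_shortExact
  have := hS.mono_f
  let k' := hS.exact.lift (ModuleCat.ofHom k) (ModuleCat.hom_ext hk)
  exact ⟨k'.hom, ModuleCat.hom_ext_iff.1 (hS.exact.lift_f _ _)⟩

theorem exists_pushout (h : ShortExact f g) {Y : ModuleCat.{u} A} (a : M₁ →ₗ[A] Y) :
    ∃ (W : ModuleCat.{u} A) (i : Y →ₗ[A] W) (j : M₂ →ₗ[A] W) (p : W →ₗ[A] M₃), ShortExact i p ∧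
      ∀ (C : ModuleCat.{u} A) (b : Y →ₗ[A] C) (c : M₂ →ₗ[A] C), c ∘ₗ f = b ∘ₗ a →
        ∃ d : W →ₗ[A] C, d ∘ₗ j = c := by
  let a' := ModuleCat.ofHom a
  refine ⟨_, _, (Limits.pushout.inl _ a').hom, _,
    shortExact_hom_iff.2 (shortExact_pushout h.shortComplex_shortExact a'), fun C b c hbc ↦ ?_⟩
  have hw : ModuleCat.ofHom f ≫ ModuleCat.ofHom c = a' ≫ ModuleCat.ofHom b := ModuleCat.hom_ext hbc
  exact ⟨(Limits.pushout.desc _ _ hw).hom, ModuleCat.hom_ext_iff.1 (Limits.pushout.inl_desc _ _ hw)⟩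

end ShortExact

/-- Every map from a member of the class `X` to `C` factors through a member of the class `Y`. For
`X = 𝒫` and `Y` its members of projective dimension at most `d`, a module `C` in `𝒫` with this
property is a summand of a member of `Y`, by factoring its identity. -/
def MapsFactorThrough (X Y : ModuleCat.{u} A → Prop) (C : ModuleCat.{u} A) : Prop :=
  ∀ Z, X Z → ∀ φ : Z →ₗ[A] C, ∃ W, Y W ∧ ∃ (a : Z →ₗ[A] W) (b : W →ₗ[A] C), b ∘ₗ a = φ

namespace MapsFactorThrough

variable {X Y : ModuleCat.{u} A → Prop} {N C D : ModuleCat.{u} A}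

theorem of_isSummand (hC : MapsFactorThrough X Y C) (h : IsSummand D C) :
    MapsFactorThrough X Y D := by
  intro Z hZ φ
  obtain ⟨s, r, hrs⟩ := h
  obtain ⟨W, hW, a, b, hab⟩ := hC Z hZ (s ∘ₗ φ)
  exact ⟨W, hW, a, r ∘ₗ b, by rw [LinearMap.comp_assoc, hab, ← LinearMap.comp_assoc, hrs,
    LinearMap.id_comp]⟩

theorem of_shortExact (hX : Resolving X) (hYX : ∀ W, Y W → X W)
    (hYfin : ∀ W : ModuleCat.{u} A, Y W → Module.Finite A W)
    (hY : ∀ (M₁ M₂ M₃ : ModuleCat.{u} A) (f : M₁ →ₗ[A] M₂) (g : M₂ →ₗ[A] M₃),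
      ShortExact f g → Y M₁ → Y M₃ → Y M₂)
    {f : N →ₗ[A] C} {q : C →ₗ[A] D} (h : ShortExact f q)
    (hN : MapsFactorThrough X Y N) (hD : MapsFactorThrough X Y D) :
    MapsFactorThrough X Y C := by
  intro Z hZ φ
  obtain ⟨V, hV, a, b, hab⟩ := hD Z hZ (q ∘ₗ φ)
  have := hYfin V hV
  obtain ⟨m, π, hπ⟩ := Module.Finite.exists_fin' A V
  obtain ⟨σ, hσ⟩ := Module.projective_lifting_property q (b ∘ₗ π) h.2.2
  have hP : X (ModuleCat.of A (Z × (Fin m → A))) :=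
    hX.2.1 Z _ (ModuleCat.of A (Fin m → A)) (LinearMap.inl A Z _) (LinearMap.snd A Z _)
      ⟨LinearMap.inl_injective, .inl_snd, LinearMap.snd_surjective⟩ hZ
      (hX.1 _ (inferInstanceAs (Module.Finite A (Fin m → A)))
        (inferInstanceAs (Module.Projective A (Fin m → A))))
  let g : ModuleCat.of A (Z × (Fin m → A)) →ₗ[A] V := a.coprod π
  have hg : Function.Surjective g := fun v ↦
    let ⟨y, hy⟩ := hπ v
    ⟨(0, y), by simp [g, hy]⟩
  let c : ModuleCat.of A (Z × (Fin m → A)) →ₗ[A] C := φ.coprod σ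
  have hqc : q ∘ₗ c = b ∘ₗ g := by rw [LinearMap.comp_coprod, LinearMap.comp_coprod, hab, hσ]
  have hK := shortExact_subtype_ker hg
  obtain ⟨k, hk⟩ := h.exists_comp_eq_of_comp_eq_zero (K := .of A (LinearMap.ker g))
    (c ∘ₗ (LinearMap.ker g).subtype) <| by
      rw [← LinearMap.comp_assoc, hqc, LinearMap.comp_assoc, g.comp_ker_subtype,
        LinearMap.comp_zero]
  obtain ⟨U, hU, a', b', rfl⟩ := hN _ (hX.2.2 _ _ _ _ _ hK hP (hYX V hV)) k
  obtain ⟨W, i, j, p, hip, hW⟩ := hK.exists_pushout a'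
  obtain ⟨d, hd⟩ := hW C (f ∘ₗ b') c hk.symm
  refine ⟨W, hY _ _ _ _ _ hip hU hV, j ∘ₗ LinearMap.inl A Z _, d, ?_⟩
  rw [← LinearMap.comp_assoc, hd, LinearMap.coprod_inl]

end MapsFactorThrough

theorem isSemisimpleModule_quotient_jacobson [IsArtinianRing A] :
    IsSemisimpleModule A (A ⧸ Ring.jacobson A) :=
  (IsArtinian.isSemisimpleModule_iff_jacobson A _).2 (Module.jacobson_quotient_jacobson A A)

theorem isSummand_quotient_jacobson_of_isSimpleModule [IsArtinianRing A] (S : ModuleCat.{u} A)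
    [IsSimpleModule A S] : IsSummand S (ModuleCat.of A (A ⧸ Ring.jacobson A)) := by
  have := IsSimpleModule.nontrivial A S
  obtain ⟨x, hx⟩ := exists_ne (0 : S)
  let f : (A ⧸ Ring.jacobson A) →ₗ[A] S :=
    (Ring.jacobson A).liftQ (LinearMap.toSpanSingleton A S x)
      (IsSemisimpleModule.jacobson_le_ker _ _ _ _ _)
  have hf : Function.Surjective f :=
    .of_comp (g := (Ring.jacobson A).mkQ) (IsSimpleModule.toSpanSingleton_surjective A hx)
  have := isSemisimpleModule_quotient_jacobson (A := A)
  obtain ⟨s, hs⟩ := IsSemisimpleModule.lifting_property f hf LinearMap.id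
  exact ⟨s, f, hs⟩

theorem isSummand_of_subsingleton (M S : ModuleCat.{u} A) [Subsingleton M] : IsSummand M S :=
  ⟨0, 0, Subsingleton.elim _ _⟩

theorem MapsFactorThrough.of_quotient_jacobson [IsArtinianRing A]
    {X Y : ModuleCat.{u} A → Prop} (hX : Resolving X) (hYX : ∀ W, Y W → X W)
    (hYfin : ∀ W : ModuleCat.{u} A, Y W → Module.Finite A W)
    (hY : ∀ (M₁ M₂ M₃ : ModuleCat.{u} A) (f : M₁ →ₗ[A] M₂) (g : M₂ →ₗ[A] M₃),
      ShortExact f g → Y M₁ → Y M₃ → Y M₂)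
    (h : MapsFactorThrough X Y (ModuleCat.of A (A ⧸ Ring.jacobson A))) (M : ModuleCat.{u} A)
    [Module.Finite A M] : MapsFactorThrough X Y M := by
  suffices ∀ (N : Type u) [AddCommGroup N] [Module A N], IsFiniteLength A N →
      MapsFactorThrough X Y (ModuleCat.of A N) from
    this M (isFiniteLength_iff_isNoetherian_isArtinian.2 ⟨inferInstance, inferInstance⟩)
  intro N _ _ hN
  induction hN with
  | of_subsingleton => exact h.of_isSummand (isSummand_of_subsingleton _ _)
  | @of_simple_quotient N _ _ K _ _ ih =>
    have hK : ShortExact (M₁ := .of A K) (M₂ := .of A N) (M₃ := .of A (N ⧸ K)) K.subtype K.mkQ :=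
      ⟨K.injective_subtype, LinearMap.exact_subtype_mkQ K, K.mkQ_surjective⟩
    exact of_shortExact hX hYX hYfin hY hK ih
      (h.of_isSummand (isSummand_quotient_jacobson_of_isSimpleModule _))

theorem ContravariantlyFinite.exists_forall_pdLE [IsArtinianRing A]
    (hcf : ContravariantlyFinite (InP : ModuleCat.{u} A → Prop)) :
    ∃ n, ∀ M : ModuleCat.{u} A, InP M → pdLE M n := by
  obtain ⟨W, f, hW, hf⟩ := hcf (ModuleCat.of A (A ⧸ Ring.jacobson A))
    (inferInstanceAs (Module.Finite A (A ⧸ Ring.jacobson A)))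
  obtain ⟨n, hn⟩ := hW.2
  refine ⟨n, fun M hM ↦ ?_⟩
  have := hM.1
  have hfactor : MapsFactorThrough InP (fun W ↦ InP W ∧ pdLE W n) M :=
    .of_quotient_jacobson resolving_inP (fun _ ↦ And.left) (fun _ hW ↦ hW.1.1)
      (fun _ _ _ _ _ h h₁ h₃ ↦ ⟨h.inP_middle h₁.1 h₃.1, h.pdLE_middle h₁.2 h₃.2⟩)
      (fun Z hZ φ ↦ ⟨W, ⟨hW, hn⟩, let ⟨a, ha⟩ := hf Z hZ φ; ⟨a, f, ha⟩⟩) M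
  obtain ⟨V, hV, a, b, hab⟩ := hfactor M hM LinearMap.id
  exact IsSummand.pdLE ⟨a, b, hab⟩ hV.2

end Factor

section Summands

variable {A : Type u} [Ring A]

theorem IsSummand.trans {L M N : ModuleCat.{u} A} (hLM : IsSummand L M) (hMN : IsSummand M N) :
    IsSummand L N := by
  obtain ⟨s, r, hrs⟩ := hLM
  obtain ⟨s', r', hrs'⟩ := hMN
  refine ⟨s' ∘ₗ s, r ∘ₗ r', ?_⟩
  rw [LinearMap.comp_assoc, ← LinearMap.comp_assoc s, hrs', LinearMap.id_comp, hrs]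

theorem isSummand_of_isCompl {M : ModuleCat.{u} A} {U V : Submodule A M} (h : IsCompl U V) :
    IsSummand (ModuleCat.of A U) M :=
  ⟨U.subtype, U.projectionOnto V h, Submodule.projectionOnto_comp_subtype h⟩

theorem isSummand_directSum {ι : Type u} (F : ι → ModuleCat.{u} A) (i : ι) :
    IsSummand (F i) (ModuleCat.of A (DirectSum ι fun i ↦ ↥(F i))) := by
  classical
  exact ⟨DirectSum.lof A ι (fun i ↦ ↥(F i)) i, DirectSum.component A ι (fun i ↦ ↥(F i)) i,
    LinearMap.ext fun x ↦
    DirectSum.component.lof_self (M := fun i ↦ ↥(F i)) A i x⟩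

theorem shortExact_of_isCompl {M : ModuleCat.{u} A} {U V : Submodule A M} (h : IsCompl U V) :
    ShortExact (M₁ := .of A U) (M₃ := .of A V) U.subtype (V.projectionOnto U h.symm) :=
  ⟨U.injective_subtype, LinearMap.exact_iff.2 <| by
    rw [Submodule.ker_projectionOnto, Submodule.range_subtype],
    Submodule.projectionOnto_surjective h.symm⟩

theorem exists_isCompl_of_not_indec {M : ModuleCat.{u} A} (hM : ¬Subsingleton M) (h : ¬Indec M) :
    ∃ U V : Submodule A M, IsCompl U V ∧ U ≠ ⊤ ∧ V ≠ ⊤ := by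
  obtain ⟨e, he, he₀, he₁⟩ :
      ∃ e : M →ₗ[A] M, e ∘ₗ e = e ∧ e ≠ 0 ∧ e ≠ LinearMap.id := by
    simpa only [Indec, hM, not_false_eq_true, true_and, not_forall, not_or, exists_prop] using h
  refine ⟨LinearMap.range e, LinearMap.ker e, LinearMap.IsIdempotentElem.isCompl he,
    fun htop ↦ he₁ (LinearMap.ext fun y ↦ ?_), mt LinearMap.ker_eq_top.1 he₀⟩
  obtain ⟨x, rfl⟩ := LinearMap.range_eq_top.1 htop y
  exact LinearMap.congr_fun he x

theorem pdLE_of_forall_indec {n : ℕ} (M : ModuleCat.{u} A) [IsNoetherian A M] [IsArtinian A M]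
    (h : ∀ N, Indec N → IsSummand N M → pdLE N n) : pdLE M n := by
  induction hl : Module.length A M using WellFoundedLT.induction generalizing M with
  | ind l ih =>
  subst hl
  by_cases hM : Subsingleton M
  · have : Module.Projective A M := .of_free
    exact pdLE_of_projective M n
  by_cases hind : Indec M
  · exact h M hind ⟨.id, .id, rfl⟩
  obtain ⟨U, V, hUV, hU, hV⟩ := exists_isCompl_of_not_indec hM hind
  exact (shortExact_of_isCompl hUV).pdLE_middle
    (ih _ (Submodule.length_lt hU) (.of A U)
      (fun N hN hNU ↦ h N hN (hNU.trans (isSummand_of_isCompl hUV))) rfl)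
    (ih _ (Submodule.length_lt hV) (.of A V)
      (fun N hN hNV ↦ h N hN (hNV.trans (isSummand_of_isCompl hUV.symm))) rfl)

end Summands

section Approximations

variable {A : Type u} [Ring A] {X : ModuleCat.{u} A → Prop} {W C : ModuleCat.{u} A}
  {f : W →ₗ[A] C}

theorem IsRightApprox.comp_subtype_range (hf : IsRightApprox X f) {e : W →ₗ[A] W}
    (he : f ∘ₗ e = f) (hX : X (ModuleCat.of A (LinearMap.range e))) :
    IsRightApprox X (XM := .of A (LinearMap.range e)) (f ∘ₗ (LinearMap.range e).subtype) := by
  refine ⟨hX, fun Z hZ φ ↦ ?_⟩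
  obtain ⟨h, rfl⟩ := hf.2 Z hZ φ
  refine ⟨e.rangeRestrict ∘ₗ h, ?_⟩
  exact LinearMap.ext fun z ↦ LinearMap.congr_fun he (h z)

theorem IsRightApprox.isMinimalRightApprox_of_length_le [IsNoetherian A W] [IsArtinian A W]
    (hX : ∀ M S, IsSummand M S → X S → X M) (hf : IsRightApprox X f)
    (hmin : ∀ (V : ModuleCat.{u} A) (g : V →ₗ[A] C), IsRightApprox X g →
      Module.length A W ≤ Module.length A V) : IsMinimalRightApprox X f := by
  refine ⟨hf, fun g hg ↦ ?_⟩
  have hpow (k : ℕ) : f ∘ₗ (g : Module.End A W) ^ k = f := by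
    induction k with
    | zero => rfl
    | succ k ih => rw [pow_succ', Module.End.mul_eq_comp, ← LinearMap.comp_assoc, hg, ih]
  obtain ⟨k, hk, hk₁⟩ := ((LinearMap.eventually_isCompl_ker_pow_range_pow
    (g : Module.End A W)).and (Filter.eventually_ge_atTop 1)).exists
  have htop : LinearMap.range ((g : Module.End A W) ^ k) = ⊤ := by
    by_contra hne
    have hrange := hX _ _ (isSummand_of_isCompl hk.symm) hf.1
    exact (Submodule.length_lt hne).not_ge (hmin _ _ (hf.comp_subtype_range (hpow k) hrange))
  have hsurj : Function.Surjective g := by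
    obtain ⟨j, rfl⟩ := Nat.exists_eq_add_of_le' hk₁
    rw [LinearMap.range_eq_top, pow_succ', Module.End.mul_eq_comp, LinearMap.coe_comp] at htop
    exact .of_comp htop
  exact IsNoetherian.bijective_of_surjective_endomorphism g hsurj

theorem IsRightApprox.exists_isMinimalRightApprox [IsArtinianRing A]
    (hXfin : ∀ M : ModuleCat.{u} A, X M → Module.Finite A M)
    (hX : ∀ M S, IsSummand M S → X S → X M) (hf : IsRightApprox X f) :
    ∃ (V : ModuleCat.{u} A) (g : V →ₗ[A] C), IsMinimalRightApprox X g := by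
  let s : Set (ModuleCat.{u} A) := {V | ∃ g : V →ₗ[A] C, IsRightApprox X g}
  obtain ⟨V, ⟨g, hg⟩, hmin⟩ := (InvImage.wf (fun V : ModuleCat.{u} A ↦ Module.length A V)
    (wellFounded_lt (α := ℕ∞))).has_min s ⟨W, f, hf⟩
  have := hXfin V hg.1
  exact ⟨V, g, hg.isMinimalRightApprox_of_length_le hX fun V' g' hg' ↦
    not_lt.1 (hmin V' ⟨g', hg'⟩)⟩

theorem IsMinimalRightApprox.extInjInP {I : ModuleCat.{u} A} [Module.Injective A I]
    {f : W →ₗ[A] I} (hf : IsMinimalRightApprox InP f) : ExtInjInP W := by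
  refine ⟨hf.1.1, fun Z hZ ↦ (subsingleton_ext_succ_iff Z W 0).2 <|
    subsingleton_ext_one_of_forall_isSplitMono fun V i p w hS ↦ ?_⟩
  have hV : InP V := (shortExact_hom_iff.2 hS).inP_middle hf.1.1 hZ
  obtain ⟨f', hf'⟩ := Module.Injective.out i.hom (shortExact_hom_iff.2 hS).1 f
  obtain ⟨h, rfl⟩ := hf.1.2 V hV f'
  have hbij : Function.Bijective (h ∘ₗ i.hom) := hf.2 _ (LinearMap.ext hf')
  let e := LinearEquiv.ofBijective _ hbij
  exact ⟨⟨⟨ModuleCat.ofHom (e.symm.toLinearMap ∘ₗ h),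
    ModuleCat.hom_ext (LinearMap.ext e.symm_apply_apply)⟩⟩⟩

end Approximations

section InjectiveEmbeddings

variable {A : Type u} [Ring A]

/-- `i` embeds `M` as an essential submodule: every submodule of `I` that meets the image of `i`
trivially is zero. Finitely generated injective modules are found as essential extensions of
maximal length. -/
def IsEssentialEmbedding {M I : Type*} [AddCommGroup M] [Module A M] [AddCommGroup I] [Module A I]
    (i : M →ₗ[A] I) : Prop :=
  Function.Injective i ∧ ∀ N : Submodule A I, Disjoint N (LinearMap.range i) → N = ⊥

variable {M I J : Type*} [AddCommGroup M] [Module A M] [AddCommGroup I] [Module A I]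
  [AddCommGroup J] [Module A J]

theorem isEssentialEmbedding_id : IsEssentialEmbedding (LinearMap.id : M →ₗ[A] M) :=
  ⟨Function.injective_id, fun N hN ↦ by rwa [LinearMap.range_id, disjoint_top] at hN⟩

theorem IsEssentialEmbedding.comp {j : I →ₗ[A] J} {i : M →ₗ[A] I}
    (hj : IsEssentialEmbedding j) (hi : IsEssentialEmbedding i) :
    IsEssentialEmbedding (j ∘ₗ i) := by
  refine ⟨hj.1.comp hi.1, fun N hN ↦ hj.2 N ?_⟩
  have hN' : N.comap j = ⊥ := by
    refine hi.2 _ (Submodule.disjoint_def.2 ?_)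
    rintro _ hx ⟨m, rfl⟩
    exact hj.1 ((Submodule.disjoint_def.1 hN _ hx ⟨m, rfl⟩).trans (map_zero j).symm)
  refine Submodule.disjoint_def.2 ?_
  rintro _ hx ⟨y, rfl⟩
  rw [(Submodule.mem_bot A).1 (hN' ▸ hx : y ∈ (⊥ : Submodule A I)), map_zero]

theorem exists_maximal_disjoint (N : Submodule A M) :
    ∃ L : Submodule A M, Maximal (Disjoint · N) L := by
  obtain ⟨L, -, hL⟩ := zorn_le_nonempty₀ {L : Submodule A M | Disjoint L N}
    (fun c hc hchain _ _ ↦ ⟨sSup c, hchain.directedOn.disjoint_sSup_left.2 fun _ h ↦ hc h,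
      fun _ ↦ le_sSup⟩) ⊥ disjoint_bot_left
  exact ⟨L, hL⟩

theorem isEssentialEmbedding_mkQ_comp {j : I →ₗ[A] J} (hj : Function.Injective j)
    {N : Submodule A J} (hN : Maximal (Disjoint · (LinearMap.range j)) N) :
    IsEssentialEmbedding (N.mkQ ∘ₗ j) := by
  have hinj : Function.Injective (N.mkQ ∘ₗ j) := by
    refine (injective_iff_map_eq_zero _).2 fun x hx ↦ hj ?_
    rw [map_zero]
    exact Submodule.disjoint_def.1 hN.prop _ ((Submodule.Quotient.mk_eq_zero N).1 hx) ⟨x, rfl⟩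
  refine ⟨hinj, fun L hL ↦ ?_⟩
  have hdisj : Disjoint (L.comap N.mkQ) (LinearMap.range j) := by
    refine Submodule.disjoint_def.2 ?_
    rintro _ hx ⟨y, rfl⟩
    have hy : (N.mkQ ∘ₗ j) y = 0 := Submodule.disjoint_def.1 hL _ hx ⟨y, rfl⟩
    rw [hinj (hy.trans (map_zero _).symm), map_zero]
  have hcomap : L.comap N.mkQ = N := (hN.eq_of_le hdisj (N.le_comap_mkQ L)).symm
  rw [← Submodule.map_comap_eq_of_surjective N.mkQ_surjective L, hcomap, Submodule.mkQ_map_self]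

theorem injective_of_forall_isEssentialEmbedding_surjective (I : ModuleCat.{u} A)
    (h : ∀ (J : ModuleCat.{u} A) (j : I →ₗ[A] J), IsEssentialEmbedding j → Function.Surjective j) :
    Module.Injective A I := by
  let Q := Injective.under I
  let j : I →ₗ[A] Q := (Injective.ι I).hom
  have hj : Function.Injective j := (ModuleCat.mono_iff_injective (Injective.ι I)).1 inferInstance
  obtain ⟨N, hN⟩ := exists_maximal_disjoint (LinearMap.range j)
  have hess := isEssentialEmbedding_mkQ_comp hj hN
  let e := LinearEquiv.ofBijective _ ⟨hess.1, h (.of A (Q ⧸ N)) _ hess⟩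
  let r : Retract I Q := ⟨Injective.ι I, ModuleCat.ofHom (e.symm.toLinearMap ∘ₗ N.mkQ),
    ModuleCat.hom_ext (LinearMap.ext e.symm_apply_apply)⟩
  exact (Module.injective_iff_injective_object A I).2 r.injective

section Length

variable {R : Type*} [CommRing R] [Algebra R A]

theorem exact_lcomp_mkQ_lcomp_subtype [Module R I] [IsScalarTower R A I] {L : Type*}
    [AddCommGroup L] [Module A L] (N : Submodule A L) :
    Function.Exact (LinearMap.lcomp R I N.mkQ) (LinearMap.lcomp R I N.subtype) := by
  refine fun f ↦ ⟨fun hf ↦ ?_, ?_⟩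
  · have hle : N ≤ LinearMap.ker f := fun x hx ↦ LinearMap.congr_fun hf ⟨x, hx⟩
    exact ⟨N.liftQ f hle, N.liftQ_mkQ f hle⟩
  · rintro ⟨g, rfl⟩
    refine LinearMap.ext fun x ↦ ?_
    change g (N.mkQ x) = 0
    rw [Submodule.mkQ_apply, (Submodule.Quotient.mk_eq_zero N).2 x.2, map_zero]

theorem length_linearMap_le_add [Module R I] [IsScalarTower R A I] {L : Type*}
    [AddCommGroup L] [Module A L] (N : Submodule A L) :
    Module.length R (L →ₗ[A] I) ≤
      Module.length R (N →ₗ[A] I) + Module.length R ((L ⧸ N) →ₗ[A] I) := by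
  have hinj : Function.Injective (LinearMap.lcomp R I N.mkQ) := fun f g hfg ↦
    (LinearMap.cancel_right N.mkQ_surjective).1 hfg
  have hexact : Function.Exact (LinearMap.lcomp R I N.mkQ)
      (LinearMap.lcomp R I N.subtype).rangeRestrict := fun f ↦ by
    rw [← exact_lcomp_mkQ_lcomp_subtype N f, ← LinearMap.mem_ker, LinearMap.ker_rangeRestrict,
      LinearMap.mem_ker]
  rw [Module.length_eq_add_of_exact _ _ hinj (LinearMap.surjective_rangeRestrict _) hexact,
    add_comm]
  gcongr
  exact Module.length_le_of_injective _ (Submodule.subtype_injective _)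

namespace IsEssentialEmbedding

theorem apply_mem_range_of_isSimpleModule {i : M →ₗ[A] I} (hi : IsEssentialEmbedding i)
    {S : Type*} [AddCommGroup S] [Module A S] [IsSimpleModule A S] (f : S →ₗ[A] I) (x : S) :
    f x ∈ LinearMap.range i := by
  rcases eq_bot_or_eq_top ((LinearMap.range i).comap f) with h | h
  · have hf : LinearMap.range f = ⊥ := by
      refine hi.2 _ (Submodule.disjoint_def.2 ?_)
      rintro _ ⟨s, rfl⟩ hs
      rw [(Submodule.mem_bot A).1 (h ▸ hs : s ∈ (⊥ : Submodule A S)), map_zero]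
    rw [LinearMap.range_eq_bot.1 hf]
    exact Submodule.zero_mem _
  · exact (h ▸ Submodule.mem_top : x ∈ (LinearMap.range i).comap f)

variable [Module R M] [IsScalarTower R A M] [Module R I] [IsScalarTower R A I]

theorem length_linearMap_le_of_isSimpleModule {i : M →ₗ[A] I}
    (hi : IsEssentialEmbedding i) (S : Type*) [AddCommGroup S] [Module A S] [IsSimpleModule A S] :
    Module.length R (S →ₗ[A] I) ≤ Module.length R M := by
  have := IsSimpleModule.nontrivial A S
  obtain ⟨x, hx⟩ := exists_ne (0 : S)
  let ev : (S →ₗ[A] I) →ₗ[R] LinearMap.range (i.restrictScalars R) :=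
    (LinearMap.applyₗ' R x).codRestrict _ fun f ↦ hi.apply_mem_range_of_isSimpleModule f x
  have hev : Function.Injective ev := by
    intro f g hfg
    have hfgx : f x = g x := congrArg Subtype.val hfg
    refine LinearMap.ext fun s ↦ ?_
    obtain ⟨a, rfl⟩ := IsSimpleModule.toSpanSingleton_surjective A hx s
    simp only [LinearMap.toSpanSingleton_apply, map_smul, hfgx]
  exact (Module.length_le_of_injective ev hev).trans
    (Module.length_le_of_surjective _ (LinearMap.surjective_rangeRestrict (i.restrictScalars R)))

theorem length_linearMap_le {i : M →ₗ[A] I} (hi : IsEssentialEmbedding i)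
    {L : Type*} [AddCommGroup L] [Module A L] (hL : IsFiniteLength A L) :
    Module.length R (L →ₗ[A] I) ≤ Module.length A L * Module.length R M := by
  induction hL with
  | of_subsingleton => simp
  | @of_simple_quotient L _ _ N hN _ ih =>
    rw [Module.length_eq_add_of_exact N.subtype N.mkQ N.subtype_injective N.mkQ_surjective
      (LinearMap.exact_subtype_mkQ N), add_mul, Module.length_eq_one A (L ⧸ N), one_mul]
    exact (length_linearMap_le_add N).trans
      (add_le_add ih (hi.length_linearMap_le_of_isSimpleModule _))

theorem length_le [IsArtinianRing A] {i : M →ₗ[A] I} (hi : IsEssentialEmbedding i) :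
    Module.length A I ≤ Module.length A A * Module.length R M :=
  calc Module.length A I = Module.length A (⊤ : Submodule A I) := Module.length_top.symm
    _ ≤ Module.length R ((⊤ : Submodule A I).restrictScalars R) :=
      Submodule.length_le_length_restrictScalars R _
    _ = Module.length R I := Module.length_top
    _ = Module.length R (A →ₗ[A] I) := (LinearMap.ringLmapEquivSelf A R I).length_eq.symm
    _ ≤ _ := hi.length_linearMap_le
      (isFiniteLength_iff_isNoetherian_isArtinian.2 ⟨inferInstance, inferInstance⟩)

end IsEssentialEmbedding

end Length

theorem surjective_of_injective_of_length_le [IsNoetherian A J] [IsArtinian A J] {j : I →ₗ[A] J}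
    (hj : Function.Injective j) (h : Module.length A J ≤ Module.length A I) :
    Function.Surjective j := by
  by_contra hsurj
  have hlt := Submodule.length_lt (mt LinearMap.range_eq_top.1 hsurj)
  rw [← (LinearEquiv.ofInjective j hj).length_eq] at hlt
  exact hlt.not_ge h

theorem exists_finite_injective_of_forall_length_le {M : ModuleCat.{u} A} {c : ℕ}
    (hc : ∀ (I : ModuleCat.{u} A) (i : M →ₗ[A] I), IsEssentialEmbedding i →
      Module.length A I ≤ c) :
    ∃ (I : ModuleCat.{u} A) (i : M →ₗ[A] I), Function.Injective i ∧ Module.Finite A I ∧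
      Module.Injective A I := by
  have hlength {I : ModuleCat.{u} A} {i : M →ₗ[A] I} (hi : IsEssentialEmbedding i) :
      Module.length A I ≠ ⊤ := ne_top_of_le_ne_top (ENat.natCast_ne_top c) (hc I i hi)
  have hnoeth {I : ModuleCat.{u} A} {i : M →ₗ[A] I} (hi : IsEssentialEmbedding i) :
      IsNoetherian A I ∧ IsArtinian A I :=
    isFiniteLength_iff_isNoetherian_isArtinian.1 (Module.length_ne_top_iff.1 (hlength hi))
  let s : Set ℕ := {n | ∃ (I : ModuleCat.{u} A) (i : M →ₗ[A] I),
    IsEssentialEmbedding i ∧ Module.length A I = n}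
  have hmem {I : ModuleCat.{u} A} {i : M →ₗ[A] I} (hi : IsEssentialEmbedding i) :
      (Module.length A I).toNat ∈ s := ⟨I, i, hi, (ENat.natCast_toNat (hlength hi)).symm⟩
  have hs : BddAbove s := ⟨c, by
    rintro n ⟨I, i, hi, hn⟩
    exact ENat.natCast_le_natCast.1 (hn ▸ hc I i hi)⟩
  obtain ⟨I, i, hi, hI⟩ := Nat.sSup_mem ⟨_, hmem isEssentialEmbedding_id⟩ hs
  have := (hnoeth hi).1
  refine ⟨I, i, hi.1, inferInstance,
    injective_of_forall_isEssentialEmbedding_surjective I fun J j hj ↦ ?_⟩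
  obtain ⟨_, _⟩ := hnoeth (hj.comp hi)
  refine surjective_of_injective_of_length_le hj.1 ?_
  rw [hI, ← ENat.natCast_toNat (hlength (hj.comp hi))]
  exact ENat.natCast_le_natCast.2 (le_csSup hs (hmem (hj.comp hi)))

theorem exists_finite_injective_embedding (R : Type*) [CommRing R] [IsArtinianRing R]
    [Algebra R A] [Module.Finite R A] (M : ModuleCat.{u} A) [Module.Finite A M] :
    ∃ (I : ModuleCat.{u} A) (i : M →ₗ[A] I), Function.Injective i ∧ Module.Finite A I ∧
      Module.Injective A I := by
  have : IsArtinianRing A := .of_finite R A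
  let : Module R M := Module.compHom M (algebraMap R A)
  have : IsScalarTower R A M := .of_algebraMap_smul fun _ _ ↦ rfl
  have : Module.Finite R M := .trans A M
  obtain ⟨c, hc⟩ := ENat.ne_top_iff_exists.1
    (WithTop.mul_ne_top (Module.length_ne_top (R := A) (M := A))
      (Module.length_ne_top (R := R) (M := M)))
  refine exists_finite_injective_of_forall_length_le (c := c) fun I i hi ↦ ?_
  let : Module R I := Module.compHom I (algebraMap R A)
  have : IsScalarTower R A I := .of_algebraMap_smul fun _ _ ↦ rfl
  exact hc ▸ hi.length_le

end InjectiveEmbeddings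

section ExtInjectives

variable {A : Type u} [Ring A] [IsArtinianRing A]

theorem ContravariantlyFinite.exists_shortExact_extInjInP
    (hcf : ContravariantlyFinite (InP : ModuleCat.{u} A → Prop)) {M I : ModuleCat.{u} A}
    (hM : InP M) [Module.Finite A I] [Module.Injective A I] {i : M →ₗ[A] I}
    (hi : Function.Injective i) :
    ∃ (Y Z : ModuleCat.{u} A) (f : M →ₗ[A] Y) (g : Y →ₗ[A] Z),
      ShortExact f g ∧ ExtInjInP Y ∧ InP Z := by
  obtain ⟨W, p, hp⟩ := hcf I ‹_›
  obtain ⟨Y, q, hq⟩ := hp.exists_isMinimalRightApprox (fun _ hV ↦ hV.1) fun _ _ h ↦ h.inP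
  obtain ⟨f, rfl⟩ := hq.1.2 M hM i
  have hf : Function.Injective f := .of_comp hi
  have hS := shortExact_mkQ_range hf
  exact ⟨Y, _, f, _, hS, hq.extInjInP, hS.inP_right hM hq.1.1⟩

theorem ContravariantlyFinite.pdLE_of_forall_extInjInP
    (hcf : ContravariantlyFinite (InP : ModuleCat.{u} A → Prop))
    (hinj : ∀ M : ModuleCat.{u} A, Module.Finite A M → ∃ (I : ModuleCat.{u} A) (i : M →ₗ[A] I),
      Function.Injective i ∧ Module.Finite A I ∧ Module.Injective A I)
    {n : ℕ} (h : ∀ Y : ModuleCat.{u} A, ExtInjInP Y → pdLE Y n) {M : ModuleCat.{u} A}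
    (hM : InP M) : pdLE M n := by
  obtain ⟨d, hd⟩ := hcf.exists_forall_pdLE
  suffices ∀ k, (∀ M : ModuleCat.{u} A, InP M → pdLE M (n + k)) →
      ∀ M : ModuleCat.{u} A, InP M → pdLE M n from
    this d (fun M hM ↦ (hd M hM).mono (Nat.le_add_left d n)) M hM
  intro k
  induction k with
  | zero => exact id
  | succ k ih =>
    refine fun hk ↦ ih fun M hM ↦ ?_
    obtain ⟨I, i, hi, _, _⟩ := hinj M hM.1
    obtain ⟨Y, Z, f, g, hS, hY, hZ⟩ := hcf.exists_shortExact_extInjInP hM hi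
    exact hS.pdLE_left ((h Y hY).mono (Nat.le_add_right n k)) (hk Z hZ)

theorem stmt_10_general (hcf : ContravariantlyFinite (InP : ModuleCat.{u} A → Prop))
    (hinj : ∀ M : ModuleCat.{u} A, Module.Finite A M → ∃ (I : ModuleCat.{u} A) (i : M →ₗ[A] I),
      Function.Injective i ∧ Module.Finite A I ∧ Module.Injective A I)
    {ι : Type u} (F : ι → ModuleCat.{u} A) (hF : ∀ i, InP (F i))
    (hsummand : ∀ M, Indec M → ExtInjInP M → ∃ i, IsSummand M (F i)) :
    findim A = projDim (ModuleCat.of A (DirectSum ι fun i ↦ ↥(F i))) := by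
  refine eq_of_forall_ge_iff fun c ↦ ?_
  induction c using ENat.recTopCoe with
  | top => simp only [le_top]
  | coe n =>
    rw [findim_le_iff, projDim_le_iff]
    refine ⟨fun h ↦ pdLE_directSum F fun i ↦ h _ (hF i), fun h M hM ↦
      hcf.pdLE_of_forall_extInjInP hinj (fun Y hY ↦ ?_) hM⟩
    have := hY.1.1
    refine pdLE_of_forall_indec Y fun N hN hNY ↦ ?_
    obtain ⟨i, hi⟩ := hsummand N hN (hNY.extInjInP hY)
    exact (hi.trans (isSummand_directSum F i)).pdLE h

end ExtInjectives

/-- If `𝒫` is contravariantly finite and `E` is the direct sum of the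
indecomposable Ext-injective modules in `𝒫`, then `findim Λ = pd E`. -/
theorem stmt_10 (Λ : Type u) [Ring Λ] (R : Type u) [CommRing R] [IsArtinianRing R]
    [Algebra R Λ] [Module.Finite R Λ]
    (hcf : ContravariantlyFinite (fun M : ModuleCat.{u} Λᵐᵒᵖ => InP M))
    {ι : Type u} (F : ι → ModuleCat.{u} Λᵐᵒᵖ) (hF : IsCompleteExtInjFamily F) :
    findim Λᵐᵒᵖ = projDim (ModuleCat.of Λᵐᵒᵖ (DirectSum ι (fun i => ↥(F i)))) := by
  have : IsArtinianRing Λᵐᵒᵖ := .of_finite R Λᵐᵒᵖ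
  exact stmt_10_general hcf (fun M _ ↦ exists_finite_injective_embedding R M) F
    (fun i ↦ (hF.1 i).2.1) fun M hM hM' ↦
      let ⟨i, ⟨e⟩⟩ := hF.2.1 M hM hM'
      ⟨i, e, e.symm, e.symm_comp⟩
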